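/- (Unbiasedness of the independent-sum estimator, partial form) Let (S_α)_{α ∈ ℕ^d} be integrable real random variables and let (Δ̃_α)_{α ∈ ℕ^d} be integrable real random variables with E[Δ̃_α] = E[ΔS_α] for every α. Let N be an ℕ^d-valued random variable independent of the family (Δ̃_α), with P(N ≥ α) > 0 for every α ∈ I_0^n, where n ∈ ℕ. Then the partial independent-sum estimator Z̃_n = Σ_{α ∈ I_0^n} Δ̃_α · 1_{{N ≥ α}} / P(N ≥ α) satisfies E[Z̃_n] = E[S_{(n,…,n)}]. -/

import Mathlib

open MeasureTheory ProbabilityTheory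

/-- The `i`-th difference operator: `(Δ_i S)_α = S_α − S_{α−e_i}` if `α_i > 0`,
and `(Δ_i S)_α = S_α` if `α_i = 0`. -/
def diffOp {d : ℕ} {V : Type*} [AddCommGroup V] [Module ℝ V]
    (i : Fin d) (S : (Fin d → ℕ) → V) : (Fin d → ℕ) → V :=
  fun α => if α i = 0 then S α else S α - S (Function.update α i (α i - 1))

/-- The mixed difference operator `Δ = Δ_1 ∘ ⋯ ∘ Δ_d`. -/
def mixedDiff {d : ℕ} {V : Type*} [AddCommGroup V] [Module ℝ V]
    (S : (Fin d → ℕ) → V) : (Fin d → ℕ) → V :=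
  (List.finRange d).foldr (fun i T => diffOp i T) S

/-!
Weighting by `1_{N ≥ α} / P(N ≥ α)` does not change the mean of a variable independent of `N`, so
the estimator over the box `α ≤ m` has mean `Σ_{α ≤ m} E[ΔS_α]`. Summing over one coordinate at a
time, each `Δ_i` telescopes and pins `α_i` to `m_i`, which leaves `E[S_m]`.
-/

open Finset Function

section Telescoping

lemma sum_Icc_pi_eq_sum_Icc_update {ι M : Type*} [Fintype ι] [DecidableEq ι] {κ : ι → Type*}
    [∀ i, DecidableEq (κ i)] [∀ i, PartialOrder (κ i)] [∀ i, LocallyFiniteOrder (κ i)]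
    [AddCommMonoid M] (f : (∀ i, κ i) → M) (a b : ∀ i, κ i) (i : ι) :
    ∑ α ∈ Icc a b, f α
      = ∑ β ∈ Icc (update a i (b i)) b, ∑ k ∈ Icc (a i) (b i), f (update β i k) := by
  rw [← sum_product']
  refine sum_nbij' (fun α ↦ (update α i (b i), α i)) (fun p ↦ update p.1 i p.2) ?_ ?_ ?_ ?_ ?_
  · intro α hα
    have ⟨haα, hαb⟩ := mem_Icc.1 hα
    have lower_le : update a i (b i) ≤ update α i (b i) :=
      update_le_update_iff.2 ⟨le_rfl, fun j _ ↦ haα j⟩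
    have le_upper : update α i (b i) ≤ b := update_le_iff.2 ⟨le_rfl, fun j _ ↦ hαb j⟩
    exact mem_product.2 ⟨mem_Icc.2 ⟨lower_le, le_upper⟩, mem_Icc.2 ⟨haα i, hαb i⟩⟩
  · rintro ⟨β, k⟩ hβk
    simp only [mem_product, mem_Icc, update_le_iff, le_update_iff] at hβk ⊢
    obtain ⟨⟨⟨-, haβ⟩, hβb⟩, hak, hkb⟩ := hβk
    exact ⟨⟨hak, haβ⟩, hkb, fun j _ ↦ hβb j⟩
  · intro α _
    simp
  · rintro ⟨β, k⟩ hβk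
    simp only [mem_product, mem_Icc, update_le_iff] at hβk
    have hβi : β i = b i := le_antisymm (hβk.1.2 i) hβk.1.1.1
    simp [← hβi]
  · intro α _
    simp

variable {d : ℕ} {V : Type*} [AddCommGroup V] [Module ℝ V]

lemma sum_Icc_zero_diffOp_update (i : Fin d) (S : (Fin d → ℕ) → V) (α : Fin d → ℕ) (n : ℕ) :
    ∑ k ∈ Icc 0 n, diffOp i S (update α i k) = S (update α i n) := by
  induction n with
  | zero => simp [diffOp]
  | succ n ih =>
    rw [sum_Icc_succ_top n.succ.zero_le, ih]
    simp [diffOp]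

lemma sum_Icc_update_zero_diffOp (i : Fin d) (S : (Fin d → ℕ) → V) (a b : Fin d → ℕ) :
    ∑ α ∈ Icc (update a i 0) b, diffOp i S α = ∑ α ∈ Icc (update a i (b i)) b, S α := by
  rw [sum_Icc_pi_eq_sum_Icc_update _ _ _ i, update_idem, update_self]
  refine sum_congr rfl fun β hβ ↦ ?_
  obtain ⟨haβ, hβb⟩ := mem_Icc.1 hβ
  have hβi : β i = b i := le_antisymm (hβb i) (update_le_iff.1 haβ).1
  rw [sum_Icc_zero_diffOp_update, ← hβi, update_eq_self]

lemma sum_Icc_foldr_diffOp (S : (Fin d → ℕ) → V) (m : Fin d → ℕ) {l : List (Fin d)}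
    (hl : l.Nodup) :
    ∑ α ∈ Icc (fun j ↦ if j ∈ l then 0 else m j) m, l.foldr diffOp S α = S m := by
  induction l with
  | nil => simp
  | cons i l ih =>
    obtain ⟨hil, hl⟩ := List.nodup_cons.1 hl
    have lower_cons : (fun j ↦ if j ∈ i :: l then 0 else m j)
        = update (fun j ↦ if j ∈ l then 0 else m j) i 0 := by
      ext j
      by_cases hj : j = i <;> simp [hj]
    have lower_update : update (fun j ↦ if j ∈ l then 0 else m j) i (m i)
        = fun j ↦ if j ∈ l then 0 else m j := by
      simp [hil]
    rw [List.foldr_cons, lower_cons, sum_Icc_update_zero_diffOp, lower_update, ih hl]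

theorem sum_Iic_mixedDiff (S : (Fin d → ℕ) → V) (m : Fin d → ℕ) :
    ∑ α ∈ Iic m, mixedDiff S α = S m := by
  have h := sum_Icc_foldr_diffOp S m (List.nodup_finRange d)
  simp only [List.mem_finRange, if_true] at h
  exact h

end Telescoping

section Expectation

variable {d : ℕ} {Ω E : Type*} {mΩ : MeasurableSpace Ω} {μ : Measure Ω}
  [NormedAddCommGroup E] [NormedSpace ℝ E]

lemma integrable_foldr_diffOp {S : (Fin d → ℕ) → Ω → E} {m : Fin d → ℕ}
    (hS : ∀ α ≤ m, Integrable (S α) μ) (l : List (Fin d)) :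
    ∀ α ≤ m, Integrable (fun ω ↦ l.foldr diffOp (fun β ↦ S β ω) α) μ := by
  induction l with
  | nil => exact hS
  | cons i l ih =>
    intro α hα
    have hpred : update α i (α i - 1) ≤ m :=
      (update_le_self_iff.2 (Nat.sub_le _ _)).trans hα
    simp only [List.foldr_cons, diffOp]
    split_ifs
    · exact ih α hα
    · exact (ih α hα).sub (ih _ hpred)

lemma sum_Iic_integral_mixedDiff {S : (Fin d → ℕ) → Ω → E} {m : Fin d → ℕ}
    (hS : ∀ α ≤ m, Integrable (S α) μ) :
    ∑ α ∈ Iic m, ∫ ω, mixedDiff (fun β ↦ S β ω) α ∂μ = ∫ ω, S m ω ∂μ := by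
  rw [← integral_finsetSum]
  · simp only [sum_Iic_mixedDiff]
  · exact fun α hα ↦ integrable_foldr_diffOp hS _ α (mem_Iic.1 hα)

variable [MeasurableSpace E] [BorelSpace E]

lemma integral_inv_smul_indicator_preimage {ι : Type*} [MeasurableSpace ι] {N : Ω → ι}
    {X : Ω → E} {t : Set ι} (hN : Measurable N) (hX : AEStronglyMeasurable X μ)
    (hind : IndepFun N X μ) (ht : MeasurableSet t) (hne : μ.real (N ⁻¹' t) ≠ 0) :
    ∫ ω, (μ.real (N ⁻¹' t))⁻¹ • (N ⁻¹' t).indicator X ω ∂μ = ∫ ω, X ω ∂μ := by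
  have hset : ∫ ω in N ⁻¹' t, X ω ∂μ = μ.real (N ⁻¹' t) • ∫ ω, X ω ∂μ :=
    Indep.setIntegral_eq_smul (f := id) hN.comap_le hind hX.aemeasurable ⟨t, ht, rfl⟩
      hX.aestronglyMeasurable_id_map
  rw [integral_smul, integral_indicator (hN ht), hset, inv_smul_smul₀ hne]

theorem independent_sum_estimator_unbiased_general [CompleteSpace E]
    {P : Measure Ω} [IsProbabilityMeasure P] {S X : (Fin d → ℕ) → Ω → E}
    {N : Ω → Fin d → ℕ} {m : Fin d → ℕ}
    (hS : ∀ α ≤ m, Integrable (S α) P) (hX : ∀ α ≤ m, Integrable (X α) P)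
    (hmean : ∀ α ≤ m, ∫ ω, X α ω ∂P = ∫ ω, mixedDiff (fun β ↦ S β ω) α ∂P)
    (hN : Measurable N) (hind : ∀ α ≤ m, IndepFun N (X α) P)
    (hpos : ∀ α ≤ m, 0 < P {ω | α ≤ N ω}) :
    ∫ ω, ∑ α ∈ Iic m, (P.real {ω' | α ≤ N ω'})⁻¹ • {ω' | α ≤ N ω'}.indicator (X α) ω ∂P
      = ∫ ω, S m ω ∂P := by
  have hmeas (α : Fin d → ℕ) : MeasurableSet {ω | α ≤ N ω} := hN measurableSet_Ici
  calc
    _ = ∑ α ∈ Iic m,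
          ∫ ω, (P.real {ω' | α ≤ N ω'})⁻¹ • {ω' | α ≤ N ω'}.indicator (X α) ω ∂P :=
      integral_finsetSum _ fun α hα ↦ ((hX α (mem_Iic.1 hα)).indicator (hmeas α)).smul _
    _ = ∑ α ∈ Iic m, ∫ ω, mixedDiff (fun β ↦ S β ω) α ∂P := by
      refine sum_congr rfl fun α hα ↦ ?_
      rw [mem_Iic] at hα
      rw [← hmean α hα]
      exact integral_inv_smul_indicator_preimage hN (hX α hα).aestronglyMeasurable (hind α hα)
        measurableSet_Ici (ENNReal.toReal_pos (hpos α hα).ne' (measure_ne_top _ _)).ne'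
    _ = ∫ ω, S m ω ∂P := sum_Iic_integral_mixedDiff hS

end Expectation

/-- unbiasedness of the independent-sum estimator, partial form:
with `(Δ̃_α)` integrable and `E[Δ̃_α] = E[ΔS_α]` for every `α`, and `N` independent
of the family `(Δ̃_α)` with `P(N ≥ α) > 0` on `I_0^n`, the partial estimator
`Z̃_n = Σ_{α ∈ I_0^n} Δ̃_α 1_{N ≥ α} / P(N ≥ α)` satisfies `E[Z̃_n] = E[S_{(n,…,n)}]`. -/
theorem independent_sum_estimator_unbiased {d : ℕ} (hd : 1 ≤ d)
    {Ω : Type*} [MeasureSpace Ω] [IsProbabilityMeasure (ℙ : Measure Ω)]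
    (S : (Fin d → ℕ) → Ω → ℝ) (hS : ∀ α, Integrable (S α) ℙ)
    (Δt : (Fin d → ℕ) → Ω → ℝ) (hΔt : ∀ α, Integrable (Δt α) ℙ)
    (hmean : ∀ α : Fin d → ℕ,
      (∫ ω, Δt α ω ∂ℙ) = ∫ ω, mixedDiff (fun β => S β ω) α ∂ℙ)
    (N : Ω → (Fin d → ℕ)) (hN : Measurable N)
    (hind : IndepFun N (fun ω => fun α => Δt α ω) ℙ)
    (n : ℕ)
    (hpos : ∀ α ∈ Finset.Iic ((fun _ => n) : Fin d → ℕ), 0 < ℙ {ω | α ≤ N ω}) :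
    ∫ ω, (∑ α ∈ Finset.Iic ((fun _ => n) : Fin d → ℕ),
        Δt α ω * Set.indicator {ω' | α ≤ N ω'} 1 ω
          / (ℙ {ω' | α ≤ N ω'}).toReal) ∂ℙ
      = ∫ ω, S (fun _ => n) ω ∂ℙ := by
  simpa [measureReal_def, div_eq_inv_mul, ← Set.indicator_mul_right] using
    independent_sum_estimator_unbiased_general (fun α _ ↦ hS α) (fun α _ ↦ hΔt α)
      (fun α _ ↦ hmean α) hN (fun α _ ↦ hind.comp measurable_id (measurable_pi_apply α))
      fun α hα ↦ hpos α (mem_Iic.2 hα)
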